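/- Let Q be any quiver whose underlying graph is the extended Dynkin diagram Ẽ_7: vertex set {1,2,…,8} with edges {1,2}, {2,3}, {3,8}, {4,5}, {5,6}, {6,8}, {7,8}. Then for every vertex i of Q the frieze sequence (X^i_j)_{j≥0} satisfies a linear recurrence over the field ℚ(x_1,…,x_8). -/

import Mathlib

/-- The (ordered) edge description of the extended Dynkin diagram Ẽ_7 on vertices
`{1,…,8}` : edges `{1,2}, {2,3}, {3,8}, {4,5}, {5,6}, {6,8}, {7,8}`; the vertex labelled
`k ∈ {1,…,8}` corresponds to the index `k−1` of `Fin 8`. -/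
def e7Edge (a b : ℕ) : Prop :=
  (a = 0 ∧ b = 1) ∨ (a = 1 ∧ b = 2) ∨ (a = 2 ∧ b = 7) ∨ (a = 3 ∧ b = 4) ∨
  (a = 4 ∧ b = 5) ∨ (a = 5 ∧ b = 7) ∨ (a = 6 ∧ b = 7)

section LinearlyRecurrent

variable {K : Type*} [Field K]

/-- The shift `(a_n) ↦ (a_{n+1})` on sequences, as an algebra homomorphism. -/
def seqShift (K : Type*) [Field K] : (ℕ → K) →ₐ[K] (ℕ → K) where
  toFun a n := a (n + 1)
  map_one' := rfl
  map_mul' _ _ := rfl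
  map_zero' := rfl
  map_add' _ _ := rfl
  commutes' _ := rfl

@[simp] lemma seqShift_apply (a : ℕ → K) (n : ℕ) : seqShift K a n = a (n + 1) := rfl

/-- A sequence is linearly recurrent if it lies in a finite-dimensional shift-stable space. -/
def IsLinearlyRecurrent (a : ℕ → K) : Prop :=
  ∃ W : Submodule K (ℕ → K), W.FG ∧ W.map (seqShift K).toLinearMap ≤ W ∧ a ∈ W

namespace IsLinearlyRecurrent

lemma sub {a b : ℕ → K} (ha : IsLinearlyRecurrent a) (hb : IsLinearlyRecurrent b) :
    IsLinearlyRecurrent fun n => a n - b n := by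
  obtain ⟨V, hV, hVs, haV⟩ := ha
  obtain ⟨W, hW, hWs, hbW⟩ := hb
  refine ⟨V ⊔ W, hV.sup hW, ?_, ?_⟩
  · rw [Submodule.map_sup]
    exact sup_le_sup hVs hWs
  · exact sub_mem (Submodule.mem_sup_left haV) (Submodule.mem_sup_right hbW)

lemma mul {a b : ℕ → K} (ha : IsLinearlyRecurrent a) (hb : IsLinearlyRecurrent b) :
    IsLinearlyRecurrent fun n => a n * b n := by
  obtain ⟨V, hV, hVs, haV⟩ := ha
  obtain ⟨W, hW, hWs, hbW⟩ := hb
  refine ⟨V * W, hV.mul hW, ?_, Submodule.mul_mem_mul haV hbW⟩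
  rw [Submodule.map_mul]
  exact mul_le_mul' hVs hWs

lemma one : IsLinearlyRecurrent fun _ : ℕ => (1 : K) := by
  refine ⟨Submodule.span K {1}, Submodule.fg_span_singleton _, ?_,
    Submodule.mem_span_singleton_self _⟩
  rw [Submodule.map_span, Set.image_singleton]
  exact le_of_eq (by simp)

lemma shift {a : ℕ → K} (ha : IsLinearlyRecurrent a) (k : ℕ) :
    IsLinearlyRecurrent fun n => a (n + k) := by
  induction k with
  | zero => exact ha
  | succ k ih =>
    obtain ⟨W, hW, hWs, haW⟩ := ih
    refine ⟨W, hW, hWs, ?_⟩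
    convert hWs (Submodule.mem_map_of_mem haW) using 1
    ext n
    simp [add_right_comm, add_assoc]

lemma of_shift {a : ℕ → K} (k : ℕ) (ha : IsLinearlyRecurrent fun n => a (n + k)) :
    IsLinearlyRecurrent a := by
  induction k with
  | zero => exact ha
  | succ k ih =>
    obtain ⟨W, hW, hWs, haW⟩ := ha
    refine ih ⟨W ⊔ Submodule.span K {fun n => a (n + k)},
      hW.sup (Submodule.fg_span_singleton _), ?_,
      Submodule.mem_sup_right (Submodule.mem_span_singleton_self _)⟩
    rw [Submodule.map_sup, Submodule.map_span, Set.image_singleton]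
    refine sup_le (hWs.trans le_sup_left) ?_
    rw [Submodule.span_singleton_le_iff_mem]
    refine Submodule.mem_sup_left ?_
    convert haW using 1
    ext n
    simp [add_right_comm, add_assoc]

lemma exists_recurrence {a : ℕ → K} (ha : IsLinearlyRecurrent a) :
    ∃ s : ℕ, 1 ≤ s ∧ ∃ c : Fin s → K, ∀ j, a (j + s) = ∑ t : Fin s, c t * a (j + t.val) := by
  obtain ⟨W, hW, hWs, haW⟩ := ha
  have : Module.Finite K W := Module.Finite.iff_fg.2 hW
  let f : W →ₗ[K] W := (seqShift K).toLinearMap.restrict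
    fun v hv => hWs (Submodule.mem_map_of_mem hv)
  have hpow (i : ℕ) (v : W) (j : ℕ) : ((f ^ i) v : ℕ → K) j = (v : ℕ → K) (j + i) := by
    induction i generalizing j with
    | zero => rfl
    | succ i ih =>
      rw [pow_succ', Module.End.mul_apply]
      change ((f ^ i) v : ℕ → K) (j + 1) = _
      rw [ih, add_right_comm, add_assoc]
  obtain ⟨p, hp, hpf⟩ : ∃ p : Polynomial K, p.Monic ∧ Polynomial.aeval f p = 0 :=
    ⟨_, f.charpoly_monic, f.aeval_self_charpoly⟩
  have hp' : (Polynomial.X * p).Monic := Polynomial.monic_X.mul hp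
  have hd : (Polynomial.X * p).natDegree = p.natDegree + 1 :=
    Polynomial.natDegree_X_mul hp.ne_zero
  have h0 : Polynomial.aeval f (Polynomial.X * p) = 0 := by
    rw [map_mul, hpf, mul_zero]
  refine ⟨p.natDegree + 1, Nat.le_add_left _ _,
    fun t => -(Polynomial.X * p).coeff t.val, fun j => ?_⟩
  have h1 := congrArg (fun g : W →ₗ[K] W => (g ⟨a, haW⟩ : ℕ → K) j) h0
  simp only [Polynomial.aeval_eq_sum_range, hd, LinearMap.sum_apply, LinearMap.smul_apply,
    Submodule.coe_sum, Submodule.coe_smul, Finset.sum_apply, Pi.smul_apply, hpow,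
    LinearMap.zero_apply, Submodule.coe_zero, Pi.zero_apply, smul_eq_mul] at h1
  rw [Finset.sum_range_succ, ← hd, hp'.coeff_natDegree, hd, one_mul, Finset.sum_range] at h1
  simp only [neg_mul, Finset.sum_neg_distrib]
  exact eq_neg_of_add_eq_zero_right h1

end IsLinearlyRecurrent

/-- The space of sequences of period `4`. -/
def fourPeriodic (K : Type*) [Field K] : Submodule K (ℕ → K) where
  carrier := {a | ∀ n, a (n + 4) = a n}
  add_mem' ha hb n := by simp [ha n, hb n]
  zero_mem' _ := rfl
  smul_mem' c a ha n := by simp [ha n]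

lemma fourPeriodic_fg : (fourPeriodic K).FG := by
  rw [← Module.Finite.iff_fg]
  let φ : fourPeriodic K →ₗ[K] (Fin 4 → K) :=
    (LinearMap.funLeft K K (Fin.val : Fin 4 → ℕ)).comp (fourPeriodic K).subtype
  refine Module.Finite.of_injective φ fun a b hab => Subtype.ext (funext fun n => ?_)
  induction n using Nat.strong_induction_on with
  | _ n ih =>
    by_cases hn : n < 4
    · exact congrFun hab ⟨n, hn⟩
    · obtain ⟨m, rfl⟩ := Nat.exists_eq_add_of_le' (not_lt.1 hn)
      rw [a.2 m, b.2 m, ih m (by omega)]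

lemma fourPeriodic_mul_le : fourPeriodic K * fourPeriodic K ≤ fourPeriodic K :=
  Submodule.mul_le.2 fun a ha b hb n => by simp [ha n, hb n]

lemma map_shift_fourPeriodic_le :
    (fourPeriodic K).map (seqShift K).toLinearMap ≤ fourPeriodic K := by
  rintro _ ⟨a, ha, rfl⟩ n
  exact ha (n + 1)

lemma one_mem_fourPeriodic : (1 : ℕ → K) ∈ fourPeriodic K := fun _ => rfl

lemma IsLinearlyRecurrent.of_mem_fourPeriodic {a : ℕ → K} (ha : a ∈ fourPeriodic K) :
    IsLinearlyRecurrent a :=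
  ⟨_, fourPeriodic_fg, map_shift_fourPeriodic_le, ha⟩

/-- Two sequences coupled by second-order relations with `4`-periodic coefficients are
linearly recurrent. -/
lemma isLinearlyRecurrent_of_coupled {x y u v : ℕ → K} (hu : u ∈ fourPeriodic K)
    (hv : v ∈ fourPeriodic K) (hx : ∀ n, x (n + 6) + x n = v n * y (n + 3))
    (hy : ∀ n, y (n + 6) + y n = u n * x (n + 3)) :
    IsLinearlyRecurrent x ∧ IsLinearlyRecurrent y := by
  let P := fourPeriodic K
  let V : Submodule K (ℕ → K) := Submodule.span K
    (Set.range (fun (k : Fin 6) (n : ℕ) => x (n + k.val)) ∪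
      Set.range (fun (k : Fin 6) (n : ℕ) => y (n + k.val)))
  have hxV (k : ℕ) (hk : k < 6) : (fun n => x (n + k)) ∈ V :=
    Submodule.subset_span (Or.inl ⟨⟨k, hk⟩, rfl⟩)
  have hyV (k : ℕ) (hk : k < 6) : (fun n => y (n + k)) ∈ V :=
    Submodule.subset_span (Or.inr ⟨⟨k, hk⟩, rfl⟩)
  have hVP : V ≤ P * V := fun a ha => by
    simpa using Submodule.mul_mem_mul (one_mem_fourPeriodic (K := K)) ha
  have hVs : V.map (seqShift K).toLinearMap ≤ P * V := by
    rw [Submodule.map_span, Submodule.span_le]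
    rintro _ ⟨_, ⟨k, rfl⟩ | ⟨k, rfl⟩, rfl⟩
    all_goals rw [SetLike.mem_coe]
    · by_cases hk : k.val + 1 < 6
      · convert hVP (hxV _ hk) using 1
        ext n
        simp [add_right_comm, add_assoc]
      · convert sub_mem (Submodule.mul_mem_mul hv (hyV 3 (by omega)))
          (hVP (hxV 0 (by omega))) using 1
        ext n
        have : k.val = 5 := by omega
        simpa [this, add_assoc] using eq_sub_of_add_eq (hx n)
    · by_cases hk : k.val + 1 < 6
      · convert hVP (hyV _ hk) using 1
        ext n
        simp [add_right_comm, add_assoc]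
      · convert sub_mem (Submodule.mul_mem_mul hu (hxV 3 (by omega)))
          (hVP (hyV 0 (by omega))) using 1
        ext n
        have : k.val = 5 := by omega
        simpa [this, add_assoc] using eq_sub_of_add_eq (hy n)
  have hfg : (P * V).FG := fourPeriodic_fg.mul
    (Submodule.fg_span ((Set.finite_range _).union (Set.finite_range _)))
  have hstable : (P * V).map (seqShift K).toLinearMap ≤ P * V := by
    rw [Submodule.map_mul]
    calc _ ≤ P * (P * V) := mul_le_mul' map_shift_fourPeriodic_le hVs
      _ = P * P * V := (mul_assoc _ _ _).symm
      _ ≤ P * V := mul_le_mul' fourPeriodic_mul_le le_rfl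
  exact ⟨⟨_, hfg, hstable, hVP (hxV 0 (by omega))⟩, ⟨_, hfg, hstable, hVP (hyV 0 (by omega))⟩⟩

end LinearlyRecurrent

section Frieze

variable {K : Type*} [Field K]

/-- Sequences satisfying the frieze relations of `Ẽ_7` for the bipartite orientation: `w` is
attached to the central vertex, `r` to the short arm, and `x₁, x₂, x₃` and `y₁, y₂, y₃` to the
long arms, the index `1` marking the leaf. -/
structure IsFriezeE7 (w r x₁ x₂ x₃ y₁ y₂ y₃ : ℕ → K) : Prop where
  w_ne : ∀ n, w n ≠ 0
  r_ne : ∀ n, r n ≠ 0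
  x₁_ne : ∀ n, x₁ n ≠ 0
  x₂_ne : ∀ n, x₂ n ≠ 0
  x₃_ne : ∀ n, x₃ n ≠ 0
  y₁_ne : ∀ n, y₁ n ≠ 0
  y₂_ne : ∀ n, y₂ n ≠ 0
  y₃_ne : ∀ n, y₃ n ≠ 0
  w_mul : ∀ n, w (n + 1) * w n = 1 + x₃ n * y₃ n * r n
  r_mul : ∀ n, r (n + 1) * r n = 1 + w (n + 1)
  x₁_mul : ∀ n, x₁ (n + 1) * x₁ n = 1 + x₂ (n + 1)
  x₂_mul : ∀ n, x₂ (n + 1) * x₂ n = 1 + x₁ n * x₃ n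
  x₃_mul : ∀ n, x₃ (n + 1) * x₃ n = 1 + x₂ (n + 1) * w (n + 1)
  y₁_mul : ∀ n, y₁ (n + 1) * y₁ n = 1 + y₂ (n + 1)
  y₂_mul : ∀ n, y₂ (n + 1) * y₂ n = 1 + y₁ n * y₃ n
  y₃_mul : ∀ n, y₃ (n + 1) * y₃ n = 1 + y₂ (n + 1) * w (n + 1)

namespace IsFriezeE7

variable {w r x₁ x₂ x₃ y₁ y₂ y₃ : ℕ → K}

lemma swap (h : IsFriezeE7 w r x₁ x₂ x₃ y₁ y₂ y₃) : IsFriezeE7 w r y₁ y₂ y₃ x₁ x₂ x₃ where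
  w_ne := h.w_ne
  r_ne := h.r_ne
  x₁_ne := h.y₁_ne
  x₂_ne := h.y₂_ne
  x₃_ne := h.y₃_ne
  y₁_ne := h.x₁_ne
  y₂_ne := h.x₂_ne
  y₃_ne := h.x₃_ne
  w_mul n := by rw [h.w_mul, mul_comm (x₃ n)]
  r_mul := h.r_mul
  x₁_mul := h.y₁_mul
  x₂_mul := h.y₂_mul
  x₃_mul := h.y₃_mul
  y₁_mul := h.x₁_mul
  y₂_mul := h.x₂_mul
  y₃_mul := h.x₃_mul

variable (h : IsFriezeE7 w r x₁ x₂ x₃ y₁ y₂ y₃)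
include h

lemma x₃_eq (n : ℕ) : x₃ (n + 1) = x₁ (n + 2) * x₂ (n + 1) - x₁ n := by
  apply mul_left_cancel₀ (h.x₁_ne (n + 1))
  linear_combination -x₂ (n + 1) * h.x₁_mul (n + 1) - h.x₂_mul (n + 1) + h.x₁_mul n

lemma x₃_eq' (n : ℕ) : x₃ (n + 1) = x₁ n * x₂ (n + 2) - x₁ (n + 2) := by
  apply mul_left_cancel₀ (h.x₁_ne (n + 1))
  linear_combination -x₂ (n + 2) * h.x₁_mul n - h.x₂_mul (n + 1) + h.x₁_mul (n + 1)

lemma w_eq (n : ℕ) : w (n + 2) = x₁ (n + 3) * x₃ (n + 1) - x₂ (n + 1) := by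
  apply mul_left_cancel₀ (h.x₂_ne (n + 2))
  linear_combination x₃ (n + 1) * h.x₃_eq (n + 1) - h.x₃_mul (n + 1) + h.x₂_mul (n + 1)

lemma w_eq' (n : ℕ) : w (n + 2) = x₁ n * x₃ (n + 2) - x₂ (n + 3) := by
  apply mul_left_cancel₀ (h.x₂_ne (n + 2))
  linear_combination x₃ (n + 2) * h.x₃_eq' n - h.x₃_mul (n + 1) + h.x₂_mul (n + 2)

lemma w_mul_r (n : ℕ) : w (n + 2) * r n = r (n + 2) + x₃ (n + 1) * y₃ (n + 1) := by
  apply mul_left_cancel₀ (h.r_ne (n + 1))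
  linear_combination w (n + 2) * h.r_mul n - h.r_mul (n + 1) + h.w_mul (n + 1)

lemma w_mul_r' (n : ℕ) : w (n + 1) * r (n + 2) = r n + x₃ (n + 1) * y₃ (n + 1) := by
  apply mul_left_cancel₀ (h.r_ne (n + 1))
  linear_combination w (n + 1) * h.r_mul (n + 1) - h.r_mul n + h.w_mul (n + 1)

lemma y₁_mul_w (n : ℕ) : y₁ (n + 4) * w (n + 2) = r (n + 2) * x₃ (n + 2) + y₃ (n + 1) := by
  apply mul_left_cancel₀ (h.y₃_ne (n + 2))
  linear_combination h.w_mul (n + 2) - w (n + 2) * h.swap.w_eq (n + 1) - h.y₃_mul (n + 1)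

lemma y₁_mul_w' (n : ℕ) : y₁ n * w (n + 3) = r (n + 2) * x₃ (n + 2) + y₃ (n + 3) := by
  apply mul_left_cancel₀ (h.y₃_ne (n + 2))
  linear_combination h.w_mul (n + 2) - w (n + 3) * h.swap.w_eq' n - h.y₃_mul (n + 2)

lemma y₁_mul_x₃ (n : ℕ) : y₁ (n + 5) * x₃ (n + 2) = r (n + 3) * x₂ (n + 3) + r (n + 1) := by
  apply mul_left_cancel₀ (h.w_ne (n + 3))
  linear_combination x₃ (n + 2) * h.y₁_mul_w (n + 1) + r (n + 3) * h.x₃_mul (n + 2)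
    - h.w_mul_r (n + 1)

lemma y₁_mul_x₃' (n : ℕ) : y₁ n * x₃ (n + 3) = r (n + 2) * x₂ (n + 3) + r (n + 4) := by
  apply mul_left_cancel₀ (h.w_ne (n + 3))
  linear_combination x₃ (n + 3) * h.y₁_mul_w' n + r (n + 2) * h.x₃_mul (n + 2)
    - h.w_mul_r' (n + 2)

lemma y₁_mul_x₂ (n : ℕ) : y₁ (n + 6) * x₂ (n + 3) = x₁ (n + 3) * r (n + 4) + y₁ n := by
  apply mul_left_cancel₀ (h.x₃_ne (n + 3))
  linear_combination x₂ (n + 3) * h.y₁_mul_x₃ (n + 1) + r (n + 4) * h.x₂_mul (n + 3)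
    - h.y₁_mul_x₃' n

/-- The coupling of the two leaf sequences. -/
lemma y₁_add (n : ℕ) :
    y₁ (n + 6) + y₁ n = (x₁ (n + 2) * y₁ (n + 6) - r (n + 4)) * x₁ (n + 3) := by
  linear_combination - y₁ (n + 6) * h.x₁_mul (n + 2) - h.y₁_mul_x₂ n

lemma tube_eq (n : ℕ) :
    y₁ n * x₁ (n + 4) - r (n + 2) = x₁ (n + 2) * y₁ (n + 6) - r (n + 4) := by
  apply mul_left_cancel₀ (h.x₂_ne (n + 3))
  linear_combination - x₁ (n + 2) * h.y₁_mul_x₂ n - r (n + 4) * h.x₁_mul (n + 2)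
    + h.y₁_mul_x₃' n - y₁ n * h.x₃_eq (n + 2)

lemma tube_mem (k : ℕ) :
    (fun n => x₁ (n + k) * y₁ (n + k + 4) - r (n + k + 2)) ∈ fourPeriodic K := fun n => by
  have h₁ := h.tube_eq (n + k + 2)
  have h₂ := h.swap.tube_eq (n + k)
  have e : n + 4 + k = n + k + 4 := by omega
  simp only [e]
  linear_combination -h₁ - h₂

lemma isLinearlyRecurrent_x₁ : IsLinearlyRecurrent x₁ :=
  (isLinearlyRecurrent_of_coupled (h.tube_mem 2) (h.swap.tube_mem 2)
    h.swap.y₁_add h.y₁_add).1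

lemma isLinearlyRecurrent_x₂ : IsLinearlyRecurrent x₂ := by
  refine .of_shift 1 ?_
  convert ((h.isLinearlyRecurrent_x₁.shift 1).mul h.isLinearlyRecurrent_x₁).sub .one using 2
    with n
  linear_combination -h.x₁_mul n

lemma isLinearlyRecurrent_x₃ : IsLinearlyRecurrent x₃ := by
  refine .of_shift 1 ?_
  simp only [h.x₃_eq]
  exact ((h.isLinearlyRecurrent_x₁.shift 2).mul (h.isLinearlyRecurrent_x₂.shift 1)).sub
    h.isLinearlyRecurrent_x₁

lemma isLinearlyRecurrent_w : IsLinearlyRecurrent w := by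
  refine .of_shift 2 ?_
  simp only [h.w_eq]
  exact ((h.isLinearlyRecurrent_x₁.shift 3).mul (h.isLinearlyRecurrent_x₃.shift 1)).sub
    (h.isLinearlyRecurrent_x₂.shift 1)

lemma isLinearlyRecurrent_r : IsLinearlyRecurrent r := by
  refine .of_shift 2 ?_
  convert (h.isLinearlyRecurrent_x₁.mul (h.swap.isLinearlyRecurrent_x₁.shift 4)).sub
    (.of_mem_fourPeriodic (h.tube_mem 0)) using 2 with n
  simp

end IsFriezeE7

end Frieze

section Positivity

variable {σ : Type*}

/-- A rational function is positive if it is a quotient of polynomials which are positive at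
the point with all coordinates equal to `1`. -/
def IsPositiveAtOne (f : FractionRing (MvPolynomial σ ℚ)) : Prop :=
  ∃ p q : MvPolynomial σ ℚ, 0 < MvPolynomial.eval 1 p ∧ 0 < MvPolynomial.eval 1 q ∧
    f * algebraMap _ _ q = algebraMap _ _ p

namespace IsPositiveAtOne

variable {f g : FractionRing (MvPolynomial σ ℚ)}

lemma algebraMap_ne_zero {p : MvPolynomial σ ℚ} (hp : 0 < MvPolynomial.eval 1 p) :
    algebraMap _ (FractionRing (MvPolynomial σ ℚ)) p ≠ 0 := by
  rw [Ne, FaithfulSMul.algebraMap_eq_zero_iff]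
  rintro rfl
  simp at hp

lemma ne_zero (hf : IsPositiveAtOne f) : f ≠ 0 := by
  obtain ⟨p, q, hp, -, h⟩ := hf
  rintro rfl
  exact algebraMap_ne_zero hp (by rw [← h, zero_mul])

lemma of_algebraMap {p : MvPolynomial σ ℚ} (hp : 0 < MvPolynomial.eval 1 p) :
    IsPositiveAtOne (algebraMap _ (FractionRing (MvPolynomial σ ℚ)) p) :=
  ⟨p, 1, hp, by simp, by simp⟩

lemma one : IsPositiveAtOne (1 : FractionRing (MvPolynomial σ ℚ)) := by
  simpa using of_algebraMap (σ := σ) (p := 1) (by simp)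

lemma add (hf : IsPositiveAtOne f) (hg : IsPositiveAtOne g) : IsPositiveAtOne (f + g) := by
  obtain ⟨p, q, hp, hq, h⟩ := hf
  obtain ⟨p', q', hp', hq', h'⟩ := hg
  refine ⟨p * q' + p' * q, q * q', ?_, ?_, ?_⟩
  · simp only [map_add, map_mul]; positivity
  · simp only [map_mul]; positivity
  · simp only [map_add, map_mul, ← h, ← h']; ring

lemma mul (hf : IsPositiveAtOne f) (hg : IsPositiveAtOne g) : IsPositiveAtOne (f * g) := by
  obtain ⟨p, q, hp, hq, h⟩ := hf
  obtain ⟨p', q', hp', hq', h'⟩ := hg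
  refine ⟨p * p', q * q', ?_, ?_, ?_⟩
  · simp only [map_mul]; positivity
  · simp only [map_mul]; positivity
  · simp only [map_mul, ← h, ← h']; ring

lemma of_mul_right (hfg : IsPositiveAtOne (f * g)) (hg : IsPositiveAtOne g) :
    IsPositiveAtOne f := by
  obtain ⟨p, q, hp, hq, h⟩ := hfg
  obtain ⟨p', q', hp', hq', h'⟩ := hg
  refine ⟨p * q', q * p', ?_, ?_, ?_⟩
  · simp only [map_mul]; positivity
  · simp only [map_mul]; positivity
  · simp only [map_mul, ← h, ← h']; ring

lemma pow (hf : IsPositiveAtOne f) (n : ℕ) : IsPositiveAtOne (f ^ n) := by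
  induction n with
  | zero => simpa using one
  | succ n ih => rw [pow_succ]; exact ih.mul hf

lemma prod {ι : Type*} (s : Finset ι) (F : ι → FractionRing (MvPolynomial σ ℚ))
    (hF : ∀ i ∈ s, IsPositiveAtOne (F i)) : IsPositiveAtOne (∏ i ∈ s, F i) :=
  Finset.prod_induction F IsPositiveAtOne (fun _ _ => mul) one hF

end IsPositiveAtOne

/-- The frieze sequences of an acyclic quiver are positive; acyclicity is witnessed by a height
function `h` increasing along arrows. -/
lemma frieze_isPositiveAtOne [Fintype σ] (mult : σ → σ → ℕ) (h : σ → ℕ)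
    (hh : ∀ u v, mult u v ≠ 0 → h u < h v)
    (X : σ → ℕ → FractionRing (MvPolynomial σ ℚ))
    (hX0 : ∀ v, X v 0 = algebraMap (MvPolynomial σ ℚ) _ (MvPolynomial.X v))
    (hXrec : ∀ v (j : ℕ), X v (j + 1) * X v j =
      1 + (∏ s, X s (j + 1) ^ mult s v) * (∏ d, X d j ^ mult v d)) (v : σ) (j : ℕ) :
    IsPositiveAtOne (X v j) := by
  induction j generalizing v with
  | zero => rw [hX0]; exact .of_algebraMap (by simp)
  | succ j ihj =>
    induction hv : h v using Nat.strong_induction_on generalizing v with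
    | _ k ihk =>
      subst hv
      refine .of_mul_right (g := X v j) ?_ (ihj v)
      rw [hXrec]
      refine .add .one (.mul (.prod _ _ fun s _ => ?_) (.prod _ _ fun d _ => (ihj d).pow _))
      by_cases hs : mult s v = 0
      · simpa [hs] using IsPositiveAtOne.one
      · exact (ihk _ (hh s v hs) s rfl).pow _

end Positivity

/-- An arrow between `u` and `v` contributes a single factor to the frieze relation at `v`. -/
lemma pow_mul_pow_of_add_eq_one {K : Type*} [CommRing K] (f : ℕ → K) (j m m' : ℕ)
    (hm : m + m' = 1) : f (j + 1) ^ m * f j ^ m' = f (j + m) := by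
  obtain ⟨rfl, rfl⟩ | ⟨rfl, rfl⟩ := Nat.add_eq_one_iff.1 hm <;> simp

/-- Let `Q` be any orientation of Ẽ_7, encoded by the arrow multiplicity
function `mult` : for each edge `{u,v}` there is exactly one arrow between `u` and `v`
(in one of the two directions), and there are no other arrows. Then every frieze
sequence `(X^i_j)_j` in `ℚ(x_1,…,x_8)` satisfies a linear recurrence. -/
theorem stmt_3
    (mult : Fin 8 → Fin 8 → ℕ)   -- number of arrows from `u` to `v`
    (hedge : ∀ u v : Fin 8, e7Edge u.val v.val → mult u v + mult v u = 1)
    (hnonedge : ∀ u v : Fin 8, ¬ e7Edge u.val v.val → ¬ e7Edge v.val u.val → mult u v = 0)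
    -- the frieze sequences
    (X : Fin 8 → ℕ → FractionRing (MvPolynomial (Fin 8) ℚ))
    (hX0 : ∀ v, X v 0 = algebraMap (MvPolynomial (Fin 8) ℚ)
      (FractionRing (MvPolynomial (Fin 8) ℚ)) (MvPolynomial.X v))
    (hXrec : ∀ v (j : ℕ), X v (j+1) * X v j =
      1 + (∏ s : Fin 8, X s (j+1) ^ mult s v) * (∏ d : Fin 8, X d j ^ mult v d)) :
    -- every frieze sequence satisfies a linear recurrence
    ∀ i : Fin 8, ∃ s : ℕ, 1 ≤ s ∧
      ∃ coeff : Fin s → FractionRing (MvPolynomial (Fin 8) ℚ),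
        ∀ j : ℕ, X i (j + s) = ∑ t : Fin s, coeff t * X i (j + t.val) := by
  have e01 := hedge 0 1 (by simp [e7Edge])
  have e12 := hedge 1 2 (by simp [e7Edge])
  have e27 := hedge 2 7 (by simp [e7Edge])
  have e34 := hedge 3 4 (by simp [e7Edge])
  have e45 := hedge 4 5 (by simp [e7Edge])
  have e57 := hedge 5 7 (by simp [e7Edge])
  have e67 := hedge 6 7 (by simp [e7Edge])
  have hpos := frieze_isPositiveAtOne mult
    ![7 + 2 * mult 7 2 + 2 * mult 2 1 + 2 * mult 1 0, 8 + 2 * mult 7 2 + 2 * mult 2 1,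
      9 + 2 * mult 7 2, 7 + 2 * mult 7 5 + 2 * mult 5 4 + 2 * mult 4 3,
      8 + 2 * mult 7 5 + 2 * mult 5 4, 9 + 2 * mult 7 5, 9 + 2 * mult 7 6, 10]
    (by
      intro u v huv
      by_cases h₁ : e7Edge u.val v.val
      · fin_cases u <;> fin_cases v <;> simp [e7Edge] at h₁ huv ⊢ <;> omega
      · by_cases h₂ : e7Edge v.val u.val
        · fin_cases u <;> fin_cases v <;> simp [e7Edge] at h₂ huv ⊢ <;> omega
        · exact absurd (hnonedge u v h₁ h₂) huv)
    X hX0 hXrec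
  have hne (v : Fin 8) (j : ℕ) : X v j ≠ 0 := (hpos v j).ne_zero
  have hrec (v : Fin 8) (j : ℕ) : X v (j + 1) * X v j =
      1 + ∏ u, (X u (j + 1) ^ mult u v * X u j ^ mult v u) := by
    rw [hXrec, Finset.prod_mul_distrib]
  have hz (u v : Fin 8) (h₁ : ¬ e7Edge u.val v.val) (h₂ : ¬ e7Edge v.val u.val) (j : ℕ) :
      X u (j + 1) ^ mult u v * X u j ^ mult v u = 1 := by
    rw [hnonedge u v h₁ h₂, hnonedge v u h₂ h₁, pow_zero, pow_zero, one_mul]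
  have ho (u v : Fin 8) (he : mult u v + mult v u = 1) (j : ℕ) :
      X u (j + 1) ^ mult u v * X u j ^ mult v u = X u (j + mult u v) :=
    pow_mul_pow_of_add_eq_one (X u) j _ _ he
  have hv0 (j j' k : ℕ) (hj : j' = j + 1) (hk : k = j + mult 1 0) :
      X 0 j' * X 0 j = 1 + X 1 k := by
    subst hj hk
    rw [hrec, Fin.prod_univ_eight, ho 1 0 ((add_comm _ _).trans e01)]
    simp (disch := simp [e7Edge]) only [hz, one_mul, mul_one]
  have hv1 (j j' k l : ℕ) (hj : j' = j + 1) (hk : k = j + mult 0 1)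
      (hl : l = j + mult 2 1) :
      X 1 j' * X 1 j = 1 + X 0 k * X 2 l := by
    subst hj hk hl
    rw [hrec, Fin.prod_univ_eight, ho 0 1 e01, ho 2 1 ((add_comm _ _).trans e12)]
    simp (disch := simp [e7Edge]) only [hz, mul_one]
  have hv2 (j j' k l : ℕ) (hj : j' = j + 1) (hk : k = j + mult 1 2)
      (hl : l = j + mult 7 2) :
      X 2 j' * X 2 j = 1 + X 1 k * X 7 l := by
    subst hj hk hl
    rw [hrec, Fin.prod_univ_eight, ho 1 2 e12, ho 7 2 ((add_comm _ _).trans e27)]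
    simp (disch := simp [e7Edge]) only [hz, one_mul, mul_one]
  have hv3 (j j' k : ℕ) (hj : j' = j + 1) (hk : k = j + mult 4 3) :
      X 3 j' * X 3 j = 1 + X 4 k := by
    subst hj hk
    rw [hrec, Fin.prod_univ_eight, ho 4 3 ((add_comm _ _).trans e34)]
    simp (disch := simp [e7Edge]) only [hz, one_mul, mul_one]
  have hv4 (j j' k l : ℕ) (hj : j' = j + 1) (hk : k = j + mult 3 4)
      (hl : l = j + mult 5 4) :
      X 4 j' * X 4 j = 1 + X 3 k * X 5 l := by
    subst hj hk hl
    rw [hrec, Fin.prod_univ_eight, ho 3 4 e34, ho 5 4 ((add_comm _ _).trans e45)]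
    simp (disch := simp [e7Edge]) only [hz, one_mul, mul_one]
  have hv5 (j j' k l : ℕ) (hj : j' = j + 1) (hk : k = j + mult 4 5)
      (hl : l = j + mult 7 5) :
      X 5 j' * X 5 j = 1 + X 4 k * X 7 l := by
    subst hj hk hl
    rw [hrec, Fin.prod_univ_eight, ho 4 5 e45, ho 7 5 ((add_comm _ _).trans e57)]
    simp (disch := simp [e7Edge]) only [hz, one_mul, mul_one]
  have hv6 (j j' k : ℕ) (hj : j' = j + 1) (hk : k = j + mult 7 6) :
      X 6 j' * X 6 j = 1 + X 7 k := by
    subst hj hk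
    rw [hrec, Fin.prod_univ_eight, ho 7 6 ((add_comm _ _).trans e67)]
    simp (disch := simp [e7Edge]) only [hz, one_mul, mul_one]
  have hv7 (j j' k l m : ℕ) (hj : j' = j + 1) (hk : k = j + mult 2 7) (hl : l = j + mult 5 7)
      (hm : m = j + mult 6 7) : X 7 j' * X 7 j = 1 + X 2 k * X 5 l * X 6 m := by
    subst hj hk hl hm
    rw [hrec, Fin.prod_univ_eight, ho 2 7 e27, ho 5 7 e57, ho 6 7 e67]
    simp (disch := simp [e7Edge]) only [hz, one_mul, mul_one]
  have hF : IsFriezeE7 (fun n => X 7 (n + 3)) (fun n => X 6 (n + (3 + mult 6 7)))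
      (fun n => X 0 (n + (2 + mult 2 7 + mult 1 2 + mult 0 1)))
      (fun n => X 1 (n + (2 + mult 2 7 + mult 1 2))) (fun n => X 2 (n + (3 + mult 2 7)))
      (fun n => X 3 (n + (2 + mult 5 7 + mult 4 5 + mult 3 4)))
      (fun n => X 4 (n + (2 + mult 5 7 + mult 4 5))) (fun n => X 5 (n + (3 + mult 5 7))) :=
    { w_ne := fun _ => hne _ _
      r_ne := fun _ => hne _ _
      x₁_ne := fun _ => hne _ _
      x₂_ne := fun _ => hne _ _
      x₃_ne := fun _ => hne _ _
      y₁_ne := fun _ => hne _ _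
      y₂_ne := fun _ => hne _ _
      y₃_ne := fun _ => hne _ _
      w_mul := fun n => hv7 _ _ _ _ _ (by omega) (by omega) (by omega) (by omega)
      r_mul := fun n => hv6 _ _ _ (by omega) (by omega)
      x₁_mul := fun n => hv0 _ _ _ (by omega) (by omega)
      x₂_mul := fun n => hv1 _ _ _ _ (by omega) (by omega) (by omega)
      x₃_mul := fun n => hv2 _ _ _ _ (by omega) (by omega) (by omega)
      y₁_mul := fun n => hv3 _ _ _ (by omega) (by omega)
      y₂_mul := fun n => hv4 _ _ _ _ (by omega) (by omega) (by omega)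
      y₃_mul := fun n => hv5 _ _ _ _ (by omega) (by omega) (by omega) }
  intro i
  refine IsLinearlyRecurrent.exists_recurrence ?_
  fin_cases i
  · exact .of_shift _ hF.isLinearlyRecurrent_x₁
  · exact .of_shift _ hF.isLinearlyRecurrent_x₂
  · exact .of_shift _ hF.isLinearlyRecurrent_x₃
  · exact .of_shift _ hF.swap.isLinearlyRecurrent_x₁
  · exact .of_shift _ hF.swap.isLinearlyRecurrent_x₂
  · exact .of_shift _ hF.swap.isLinearlyRecurrent_x₃
  · exact .of_shift _ hF.isLinearlyRecurrent_r
  · exact .of_shift _ hF.isLinearlyRecurrent_w
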